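/- arXiv:2312.09157 — 3 statements merged into one kernel-verified Lean document; each statement's English description precedes it below -/
import Mathlib

section
/- Let d ≥ 7, n = d(d+1)/2, and let τ be a partition of n with n − 2d < τ₁ ≤ n − d. Then the dimension vector v_𝛕 associated to the triple 𝛕 = (ξ_d, ξ_d, τ) is a (positive) imaginary root of the star-shaped graph Γ_𝛕, i.e. v_𝛕 = w(v) for some w in the Weyl group W of Γ_𝛕 and some fundamental imaginary root v ∈ M. -/
/-!
Star-shaped graph with three legs of lengths `r 0`, `r 1`, `r 2`.
The vertex `none` is the central vertex `0`, and `some ⟨i, j⟩` is the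
vertex `[i, j+1]` on the `i`-th leg.
-/

/-- Vertex set `I` of the star-shaped graph. -/
abbrev StarVertex (r : Fin 3 → ℕ) := Option ((i : Fin 3) × Fin (r i))

/-- The entry `(e_u, e_w)` of the Cartan matrix of the star-shaped graph:
`2` on the diagonal, `-1` for adjacent vertices, `0` otherwise. -/
def cartan {r : Fin 3 → ℕ} : StarVertex r → StarVertex r → ℤ
  | none, none => 2
  | none, some p => if p.2.val = 0 then -1 else 0
  | some p, none => if p.2.val = 0 then -1 else 0
  | some p, some q =>
      if p.1 = q.1 then
        (if p.2.val = q.2.val then 2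
         else if p.2.val + 1 = q.2.val ∨ q.2.val + 1 = p.2.val then -1 else 0)
      else 0

/-- The pairing `(e_u, v)` of a basis vector `e_u` with `v ∈ ℤ^I`. -/
def pairing {r : Fin 3 → ℕ} (u : StarVertex r) (v : StarVertex r → ℤ) : ℤ :=
  ∑ w : StarVertex r, cartan u w * v w

/-- The fundamental reflection `s_u(v) = v - (v, e_u) e_u`. -/
def reflAt {r : Fin 3 → ℕ} (u : StarVertex r) (v : StarVertex r → ℤ) :
    StarVertex r → ℤ :=
  fun w => if w = u then v w - pairing u v else v w

/-- One direction of the edge relation of the star-shaped graph. -/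
def legRel {r : Fin 3 → ℕ} : StarVertex r → StarVertex r → Prop
  | none, some p => p.2.val = 0
  | some p, some q => p.1 = q.1 ∧ p.2.val + 1 = q.2.val
  | _, _ => False

/-- The star-shaped graph as a simple graph. -/
def starGraph (r : Fin 3 → ℕ) : SimpleGraph (StarVertex r) :=
  SimpleGraph.fromRel legRel

/-- `v ∈ M`: `v` is a fundamental imaginary root, i.e. `v ≠ 0`, the support of `v`
induces a connected subgraph, and `(e_u, v) ≤ 0` for every vertex `u`. -/
def IsFundImaginary {r : Fin 3 → ℕ} (v : StarVertex r → ℤ) : Prop :=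
  v ≠ 0 ∧ (SimpleGraph.induce {u | v u ≠ 0} (starGraph r)).Connected ∧
    ∀ u : StarVertex r, pairing u v ≤ 0

/-- `y` lies in the Weyl-group orbit of `x` (every element of `W` is a word in the
fundamental reflections, which are involutions). -/
def InWOrbit {r : Fin 3 → ℕ} (x y : StarVertex r → ℤ) : Prop :=
  ∃ l : List (StarVertex r), y = l.foldr reflAt x

/-- `y` lies in the orbit of `x` under the subgroup `H ≤ W` generated by the
reflections at the non-central vertices. -/
def InHOrbit {r : Fin 3 → ℕ} (x y : StarVertex r → ℤ) : Prop :=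
  ∃ l : List ((i : Fin 3) × Fin (r i)), y = l.foldr (fun p => reflAt (some p)) x

/-- The coordinates of `v` read along the `i`-th leg: `coord v i 0 = v₀` is the
central coordinate, `coord v i j = v_{[i,j]}` for `1 ≤ j ≤ r i`, and `0` beyond. -/
def coord {r : Fin 3 → ℕ} (v : StarVertex r → ℤ) (i : Fin 3) : ℕ → ℤ
  | 0 => v none
  | j + 1 => if h : j < r i then v (some ⟨i, ⟨j, h⟩⟩) else 0

/-- `δ(v) = v₀ - ∑_{i=1}^{3} (v₀ - v_{[i,1]})`. -/
def deltaInv {r : Fin 3 → ℕ} (v : StarVertex r → ℤ) : ℤ :=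
  v none - ∑ i : Fin 3, (v none - coord v i 1)

/-- `v ∈ (ℕ^I)*`: the coordinates of `v` are nonnegative and non-increasing along
each leg: `v₀ ≥ v_{[i,1]} ≥ ⋯ ≥ v_{[i,r_i]} ≥ 0`. -/
def InNStar {r : Fin 3 → ℕ} (v : StarVertex r → ℤ) : Prop :=
  ∀ (i : Fin 3) (j : ℕ), coord v i (j + 1) ≤ coord v i j

/-- The sequence `σ^i(v) = (v₀ - v_{[i,1]}, …, v_{[i,r_i-1]} - v_{[i,r_i]}, v_{[i,r_i]})`
of successive differences along the `i`-th leg (its entries are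
`sigmaSeq v i 0, …, sigmaSeq v i (r i)`; it vanishes beyond). -/
def sigmaSeq {r : Fin 3 → ℕ} (v : StarVertex r → ℤ) (i : Fin 3) (j : ℕ) : ℤ :=
  coord v i j - coord v i (j + 1)

/-- `v ∈ (ℕ^I)**`: `v ∈ (ℕ^I)*` and each `σ^i(v)` is non-increasing, i.e. `v = v_𝛍`
for a triple of partitions `𝛍`. -/
def InNStarStar {r : Fin 3 → ℕ} (v : StarVertex r → ℤ) : Prop :=
  InNStar v ∧ ∀ (i : Fin 3) (j : ℕ), sigmaSeq v i (j + 1) ≤ sigmaSeq v i j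

/-- A partition of `n`: a non-increasing sequence `parts 0 ≥ parts 1 ≥ ⋯`
(`parts j` is the `(j+1)`-th part) with exactly `len` nonzero parts summing to `n`. -/
structure PartitionOf (n : ℕ) where
  parts : ℕ → ℕ
  antitone : ∀ j : ℕ, parts (j + 1) ≤ parts j
  len : ℕ
  pos_of_lt : ∀ j < len, 0 < parts j
  zero_of_le : ∀ j : ℕ, len ≤ j → parts j = 0
  sum_parts : ∑ j ∈ Finset.range len, parts j = n

/-- The dimension vector `v_𝛍` of a triple of partitions of `n` whose parts are given
by `p 0, p 1, p 2`: coordinate `n` at the central vertex, and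
`n - (μ^i_1 + ⋯ + μ^i_j)` at the vertex `[i, j]`. -/
def dimVec (r : Fin 3 → ℕ) (n : ℕ) (p : Fin 3 → ℕ → ℕ) : StarVertex r → ℤ
  | none => (n : ℤ)
  | some q => (n : ℤ) - ∑ s ∈ Finset.range (q.2.val + 1), (p q.1 s : ℤ)

/-!
Reflections at the leg vertices permute the differences `sigmaSeq v i` along a leg, so it suffices
to reach by reflections a vector `v` with nonnegative differences for which no choice of one
difference from each leg has a sum exceeding `v₀`: sorting then gives a fundamental root.
If some choice of one difference per leg exceeds `v₀` by `c`, then moving these differences to the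
front, reflecting at `0` and moving them back subtracts `c` from each of them and from `v₀`.

Put `k = 2d + τ₁ - n`. For `k ≤ 0` the dimension vector is fundamental. Otherwise take, for
`s = 0, 1, …`, the `s`-th parts `d - s` of both staircases together with what remains of `τ₁`; the
excess is `k - 2s`. After `m = ⌈k / 2⌉` steps all differences on the first two legs are at most
`d - m`, and the bounds on `τ` give the required inequality, except for `d = 7` and
`τ = (21, 7)`, where two further reflections are needed.
-/

section WeylOrbit

variable {r : Fin 3 → ℕ}

lemma cartan_self (u : StarVertex r) : cartan u u = 2 := by
  rcases u with _ | p <;> simp [cartan]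

lemma reflAt_apply (u : StarVertex r) (v : StarVertex r → ℤ) (w : StarVertex r) :
    reflAt u v w = v w - if w = u then pairing u v else 0 := by
  unfold reflAt
  split_ifs <;> simp

lemma pairing_reflAt_self (u : StarVertex r) (v : StarVertex r → ℤ) :
    pairing u (reflAt u v) = -pairing u v := by
  calc pairing u (reflAt u v) = pairing u v - cartan u u * pairing u v := by
        simp [pairing, reflAt_apply, mul_sub, Finset.sum_sub_distrib]
    _ = -pairing u v := by
        rw [cartan_self]
        ring

lemma reflAt_involutive (u : StarVertex r) : Function.Involutive (reflAt u) := by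
  intro v
  funext w
  rw [reflAt_apply, pairing_reflAt_self, reflAt_apply]
  split_ifs <;> ring

lemma InWOrbit.refl (x : StarVertex r → ℤ) : InWOrbit x x :=
  ⟨[], rfl⟩

lemma InWOrbit.reflAt {x y : StarVertex r → ℤ} (h : InWOrbit x y) (u : StarVertex r) :
    InWOrbit x (reflAt u y) := by
  obtain ⟨l, rfl⟩ := h
  exact ⟨u :: l, rfl⟩

lemma InWOrbit.trans {x y z : StarVertex r → ℤ} (hxy : InWOrbit x y) (hyz : InWOrbit y z) :
    InWOrbit x z := by
  obtain ⟨l, rfl⟩ := hxy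
  obtain ⟨l', rfl⟩ := hyz
  exact ⟨l' ++ l, List.foldr_append.symm⟩

lemma InWOrbit.symm {x y : StarVertex r → ℤ} (h : InWOrbit x y) : InWOrbit y x := by
  obtain ⟨l, rfl⟩ := h
  induction l with
  | nil => exact .refl x
  | cons u l ih =>
    have hu := (InWOrbit.refl (List.foldr _root_.reflAt x (u :: l))).reflAt u
    rw [List.foldr_cons, reflAt_involutive u] at hu
    exact hu.trans ih

lemma InHOrbit.refl (x : StarVertex r → ℤ) : InHOrbit x x :=
  ⟨[], rfl⟩

lemma InHOrbit.trans {x y z : StarVertex r → ℤ} (hxy : InHOrbit x y) (hyz : InHOrbit y z) :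
    InHOrbit x z := by
  obtain ⟨l, rfl⟩ := hxy
  obtain ⟨l', rfl⟩ := hyz
  exact ⟨l' ++ l, List.foldr_append.symm⟩

lemma InHOrbit.inWOrbit {x y : StarVertex r → ℤ} (h : InHOrbit x y) : InWOrbit x y := by
  obtain ⟨l, rfl⟩ := h
  exact ⟨l.map some, List.foldr_map.symm⟩

lemma InHOrbit.apply_none {x y : StarVertex r → ℤ} (h : InHOrbit x y) : y none = x none := by
  obtain ⟨l, rfl⟩ := h
  induction l with
  | nil => rfl
  | cons p l ih => simpa [reflAt_apply] using ih

/-- Positive imaginary roots: the vectors `w(v)` with `w ∈ W` and `v ∈ M`. This is the conclusion of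
the theorem as a property of the vector, so that it can be transported along `W`-orbits. -/
def IsPosImaginaryRoot (x : StarVertex r → ℤ) : Prop :=
  ∃ v, IsFundImaginary v ∧ InWOrbit v x

lemma InWOrbit.isPosImaginaryRoot {x y : StarVertex r → ℤ} (h : InWOrbit x y)
    (hy : IsPosImaginaryRoot y) : IsPosImaginaryRoot x := by
  obtain ⟨v, hv, hvy⟩ := hy
  exact ⟨v, hv, hvy.trans h.symm⟩

end WeylOrbit

section SigmaSeq

variable {r : Fin 3 → ℕ}

lemma coord_succ_val (v : StarVertex r → ℤ) (i : Fin 3) (j : Fin (r i)) :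
    coord v i (j + 1) = v (some ⟨i, j⟩) := by
  simp [coord]

lemma coord_eq_zero_of_lt (v : StarVertex r → ℤ) {i : Fin 3} {j : ℕ} (hj : r i < j) :
    coord v i j = 0 := by
  cases j with
  | zero => omega
  | succ j => simp [coord, show ¬ j < r i by omega]

lemma sigmaSeq_eq_zero_of_lt (v : StarVertex r → ℤ) {i : Fin 3} {s : ℕ} (hs : r i < s) :
    sigmaSeq v i s = 0 := by
  rw [sigmaSeq, coord_eq_zero_of_lt v hs, coord_eq_zero_of_lt v (by omega), sub_zero]

lemma sum_range_sigmaSeq (v : StarVertex r → ℤ) (i : Fin 3) (j : ℕ) :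
    ∑ s ∈ Finset.range j, sigmaSeq v i s = v none - coord v i j :=
  Finset.sum_range_sub' (coord v i) j

lemma sum_leg_ite_eq_coord (v : StarVertex r → ℤ) (i : Fin 3) (j : ℕ) :
    ∑ x : Fin (r i), (if (x : ℕ) = j then v (some ⟨i, x⟩) else 0) = coord v i (j + 1) := by
  by_cases hj : j < r i
  · rw [Finset.sum_eq_single (⟨j, hj⟩ : Fin (r i)) (fun x _ hx ↦ if_neg (Fin.val_ne_iff.2 hx))
      (by simp)]
    simp [coord, hj]
  · rw [coord_eq_zero_of_lt v (by omega)]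
    exact Finset.sum_eq_zero fun x _ ↦ if_neg (by omega)

lemma deltaInv_eq (v : StarVertex r → ℤ) : deltaInv v = v none - ∑ i, sigmaSeq v i 0 :=
  rfl

lemma pairing_none (v : StarVertex r → ℤ) : pairing none v = -deltaInv v := by
  have leg (i : Fin 3) :
      ∑ x : Fin (r i), cartan (none : StarVertex r) (some ⟨i, x⟩) * v (some ⟨i, x⟩)
        = -coord v i 1 := by
    simp [← sum_leg_ite_eq_coord v i 0, cartan, ← Finset.sum_neg_distrib, neg_ite]
  rw [pairing, Fintype.sum_option, Fintype.sum_sigma, deltaInv, cartan_self]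
  simp only [leg, Fin.sum_univ_three]
  ring

lemma pairing_some (v : StarVertex r → ℤ) (i : Fin 3) (j : Fin (r i)) :
    pairing (some ⟨i, j⟩) v = sigmaSeq v i (j + 1) - sigmaSeq v i j := by
  have other (i' : Fin 3) (hi : i' ≠ i) :
      ∑ x : Fin (r i'), cartan (some ⟨i, j⟩ : StarVertex r) (some ⟨i', x⟩) * v (some ⟨i', x⟩)
        = 0 := by
    simp [cartan, hi.symm]
  have entry (x : Fin (r i)) :
      cartan (some ⟨i, j⟩ : StarVertex r) (some ⟨i, x⟩) * v (some ⟨i, x⟩)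
        = 2 * (if (x : ℕ) = j then v (some ⟨i, x⟩) else 0)
          - (if (x : ℕ) = j + 1 then v (some ⟨i, x⟩) else 0)
          - (if (x : ℕ) + 1 = j then v (some ⟨i, x⟩) else 0) := by
    simp only [cartan, if_true]
    split_ifs <;> omega
  have previous : cartan (some ⟨i, j⟩ : StarVertex r) none * v none
      - ∑ x : Fin (r i), (if (x : ℕ) + 1 = j then v (some ⟨i, x⟩) else 0) = -coord v i j := by
    rcases h : (j : ℕ) with _ | k
    · simp [cartan, coord, h]
    · simp [cartan, h, sum_leg_ite_eq_coord]
  rw [pairing, Fintype.sum_option, Fintype.sum_sigma,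
    Finset.sum_eq_single i (fun i' _ ↦ other i') (by simp)]
  simp only [entry, Finset.sum_sub_distrib, ← Finset.mul_sum, sum_leg_ite_eq_coord, sigmaSeq]
  linarith

lemma sigmaSeq_reflAt_none (v : StarVertex r → ℤ) (i : Fin 3) (s : ℕ) :
    sigmaSeq (reflAt none v) i s = sigmaSeq v i s + if s = 0 then deltaInv v else 0 := by
  have hcoord (k : ℕ) :
      coord (reflAt none v) i k = coord v i k + if k = 0 then deltaInv v else 0 := by
    cases k <;> simp [coord, reflAt_apply, pairing_none]
  simp only [sigmaSeq, hcoord]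
  simp only [Nat.add_eq_zero_iff, one_ne_zero, and_false, if_false, add_zero]
  ring

lemma coord_reflAt_some (v : StarVertex r → ℤ) (i : Fin 3) (j : Fin (r i)) (i' : Fin 3) (k : ℕ) :
    coord (reflAt (some ⟨i, j⟩) v) i' k
      = coord v i' k - if i' = i ∧ k = j + 1 then pairing (some ⟨i, j⟩) v else 0 := by
  rcases k with _ | k
  · simp [coord, reflAt_apply]
  · by_cases hk : k < r i'
    · by_cases hi : i' = i
      · subst hi
        simp [coord, reflAt_apply, hk, Fin.ext_iff]
      · simp [coord, reflAt_apply, hk, hi]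
    · have : ¬(i' = i ∧ k + 1 = (j : ℕ) + 1) := by
        rintro ⟨rfl, h⟩
        omega
      rw [if_neg this]
      simp [coord, hk]

lemma sigmaSeq_reflAt_some_of_ne (v : StarVertex r → ℤ) {i i' : Fin 3} (j : Fin (r i))
    (hi : i' ≠ i) : sigmaSeq (reflAt (some ⟨i, j⟩) v) i' = sigmaSeq v i' := by
  funext s
  simp [sigmaSeq, coord_reflAt_some, hi]

lemma sigmaSeq_reflAt_some_self (v : StarVertex r → ℤ) (i : Fin 3) (j : Fin (r i)) (s : ℕ) :
    sigmaSeq (reflAt (some ⟨i, j⟩) v) i s = sigmaSeq v i (Equiv.swap (j : ℕ) (j + 1) s) := by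
  simp only [sigmaSeq, coord_reflAt_some, pairing_some, true_and, Nat.add_right_cancel_iff]
  rcases eq_or_ne s j with rfl | hj
  · simp only [Nat.left_eq_add, one_ne_zero, if_true, if_false, sub_zero, Equiv.swap_apply_left]
    ring
  rcases eq_or_ne s (j + 1) with rfl | hj'
  · simp only [Nat.add_eq_left, one_ne_zero, if_true, if_false, sub_zero, Equiv.swap_apply_right]
    ring
  rw [Equiv.swap_apply_of_ne_of_ne hj hj', if_neg hj, if_neg hj', sub_zero, sub_zero]

end SigmaSeq

section Reordering

variable {r : Fin 3 → ℕ}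

lemma exists_inHOrbit_sigmaSeq_leg_perm (i : Fin 3) (π : Equiv.Perm (Fin (r i + 1)))
    (v : StarVertex r → ℤ) :
    ∃ w, InHOrbit v w ∧ (∀ s : Fin (r i + 1), sigmaSeq w i s = sigmaSeq v i (π s)) ∧
      ∀ i' ≠ i, sigmaSeq w i' = sigmaSeq v i' := by
  have hπ : π ∈ Submonoid.closure
      (Set.range fun j : Fin (r i) ↦ Equiv.swap j.castSucc j.succ) := by
    rw [Equiv.Perm.mclosure_swap_castSucc_succ]
    exact Submonoid.mem_top π
  induction hπ using Submonoid.closure_induction generalizing v with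
  | mem _ h =>
    obtain ⟨j, rfl⟩ := h
    refine ⟨reflAt (some ⟨i, j⟩) v, ⟨[⟨i, j⟩], rfl⟩, fun s ↦ ?_, fun i' hi ↦
      sigmaSeq_reflAt_some_of_ne v j hi⟩
    rw [sigmaSeq_reflAt_some_self]
    exact congrArg (sigmaSeq v i) (Fin.val_injective.swap_apply j.castSucc j.succ s)
  | one => exact ⟨v, .refl v, fun s ↦ rfl, fun i' _ ↦ rfl⟩
  | mul π₁ π₂ _ _ ih₁ ih₂ =>
    obtain ⟨w₁, hv₁, h₁, h₁'⟩ := ih₁ v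
    obtain ⟨w₂, h₁₂, h₂, h₂'⟩ := ih₂ w₁
    exact ⟨w₂, hv₁.trans h₁₂, fun s ↦ (h₂ s).trans (h₁ (π₂ s)),
      fun i' hi ↦ (h₂' i' hi).trans (h₁' i' hi)⟩

lemma exists_inHOrbit_sigmaSeq_perm (π : ∀ i, Equiv.Perm (Fin (r i + 1)))
    (v : StarVertex r → ℤ) :
    ∃ w, InHOrbit v w ∧ ∀ i (s : Fin (r i + 1)), sigmaSeq w i s = sigmaSeq v i (π i s) := by
  obtain ⟨w₀, hv, h₀, h₀'⟩ := exists_inHOrbit_sigmaSeq_leg_perm 0 (π 0) v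
  obtain ⟨w₁, h₀₁, h₁, h₁'⟩ := exists_inHOrbit_sigmaSeq_leg_perm 1 (π 1) w₀
  obtain ⟨w₂, h₁₂, h₂, h₂'⟩ := exists_inHOrbit_sigmaSeq_leg_perm 2 (π 2) w₁
  refine ⟨w₂, (hv.trans h₀₁).trans h₁₂, fun i s ↦ ?_⟩
  fin_cases i
  · exact (congrFun (h₂' 0 (by decide)) s).trans <| (congrFun (h₁' 0 (by decide)) s).trans (h₀ s)
  · exact (congrFun (h₂' 1 (by decide)) s).trans <| (h₁ s).trans <|
      congrFun (h₀' 1 (by decide)) _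
  · exact (h₂ s).trans <| (congrFun (h₁' 2 (by decide)) _).trans <|
      congrFun (h₀' 2 (by decide)) _

lemma inNStar_iff_sigmaSeq_nonneg {v : StarVertex r → ℤ} :
    InNStar v ↔ ∀ i s, 0 ≤ sigmaSeq v i s :=
  forall₂_congr fun _ _ ↦ sub_nonneg.symm

lemma InNStar.antitone_coord {v : StarVertex r → ℤ} (hv : InNStar v) (i : Fin 3) :
    Antitone (coord v i) :=
  antitone_nat_of_succ_le (hv i)

lemma InNStar.coord_nonneg {v : StarVertex r → ℤ} (hv : InNStar v) (i : Fin 3) (j : ℕ) :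
    0 ≤ coord v i j := by
  rw [← coord_eq_zero_of_lt v (show r i < r i + j + 1 by omega)]
  exact hv.antitone_coord i (by omega)

lemma InNStar.sum_sigmaSeq_le {v : StarVertex r → ℤ} (hv : InNStar v) (i : Fin 3) (S : Finset ℕ) :
    ∑ s ∈ S, sigmaSeq v i s ≤ v none := by
  calc ∑ s ∈ S, sigmaSeq v i s ≤ ∑ s ∈ Finset.range (S.sup id + 1), sigmaSeq v i s :=
        Finset.sum_le_sum_of_subset_of_nonneg S.subset_range_sup_succ fun s _ _ ↦
          inNStar_iff_sigmaSeq_nonneg.1 hv i s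
    _ ≤ v none := by
        rw [sum_range_sigmaSeq]
        exact sub_le_self _ (hv.coord_nonneg i _)

lemma InNStar.exists_inNStarStar {v : StarVertex r → ℤ} (hv : InNStar v) :
    ∃ w, InHOrbit v w ∧ InNStarStar w ∧ ∀ i, ∃ s, sigmaSeq w i 0 = sigmaSeq v i s := by
  rw [inNStar_iff_sigmaSeq_nonneg] at hv
  let π (i : Fin 3) : Equiv.Perm (Fin (r i + 1)) :=
    Tuple.sort fun s : Fin (r i + 1) ↦ -sigmaSeq v i s
  obtain ⟨w, hvw, hw⟩ := exists_inHOrbit_sigmaSeq_perm π v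
  have hnonneg (i : Fin 3) (s : ℕ) : 0 ≤ sigmaSeq w i s := by
    rcases le_or_gt s (r i) with hs | hs
    · exact (hv i _).trans_eq (hw i ⟨s, by omega⟩).symm
    · exact (sigmaSeq_eq_zero_of_lt w hs).ge
  refine ⟨w, hvw, ⟨inNStar_iff_sigmaSeq_nonneg.2 hnonneg, fun i s ↦ ?_⟩, fun i ↦ ⟨_, hw i 0⟩⟩
  rcases lt_or_ge s (r i) with hs | hs
  · have hsort := Tuple.monotone_sort (fun s : Fin (r i + 1) ↦ -sigmaSeq v i s)
      (show (⟨s, by omega⟩ : Fin (r i + 1)) ≤ ⟨s + 1, by omega⟩ by simp)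
    have h₁ := hw i ⟨s, by omega⟩
    have h₂ := hw i ⟨s + 1, by omega⟩
    rw [h₁, h₂]
    exact neg_le_neg_iff.1 hsort
  · rw [sigmaSeq_eq_zero_of_lt w (by omega)]
    exact hnonneg i s

lemma InNStar.connected_support {v : StarVertex r → ℤ} (hv : InNStar v) (h₀ : v none ≠ 0) :
    (SimpleGraph.induce {u | v u ≠ 0} (starGraph r)).Connected := by
  rw [SimpleGraph.connected_iff_exists_forall_reachable]
  refine ⟨⟨none, h₀⟩, ?_⟩
  rintro ⟨_ | ⟨i, j, hj⟩, hw⟩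
  · rfl
  induction j with
  | zero => exact SimpleGraph.Adj.reachable (by simp [starGraph, legRel])
  | succ j ih =>
    have hprev : v (some ⟨i, ⟨j, by omega⟩⟩) ≠ 0 := by
      have hle := hv i (j + 1)
      have hnonneg := hv.coord_nonneg i (j + 2)
      rw [coord_succ_val v i ⟨j + 1, hj⟩] at hle hnonneg
      rw [coord_succ_val v i ⟨j, by omega⟩] at hle
      exact ((hnonneg.lt_of_ne' hw).trans_le hle).ne'
    refine (ih (by omega) hprev).trans (SimpleGraph.Adj.reachable ?_)
    simp [starGraph, legRel]

lemma InNStarStar.isFundImaginary {v : StarVertex r → ℤ} (hv : InNStarStar v)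
    (h₀ : v none ≠ 0) (hδ : 0 ≤ deltaInv v) : IsFundImaginary v := by
  refine ⟨fun h ↦ h₀ (congrFun h none), hv.1.connected_support h₀, ?_⟩
  rintro (_ | ⟨i, j⟩)
  · rw [pairing_none]
    exact neg_nonpos.2 hδ
  · rw [pairing_some]
    exact sub_nonpos.2 (hv.2 i j)

lemma InNStar.isPosImaginaryRoot_of_sigmaSeq_le {v : StarVertex r → ℤ} (hv : InNStar v)
    (h₀ : v none ≠ 0) {B : Fin 3 → ℤ} (hB : ∀ i s, sigmaSeq v i s ≤ B i)
    (hsum : ∑ i, B i ≤ v none) : IsPosImaginaryRoot v := by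
  obtain ⟨w, hvw, hw, hfirst⟩ := hv.exists_inNStarStar
  refine hvw.inWOrbit.isPosImaginaryRoot ⟨w, hw.isFundImaginary ?_ ?_, .refl w⟩
  · rwa [hvw.apply_none]
  · rw [deltaInv_eq, hvw.apply_none, sub_nonneg]
    refine (Finset.sum_le_sum fun i _ ↦ ?_).trans hsum
    obtain ⟨s, hs⟩ := hfirst i
    exact hs.trans_le (hB i s)

end Reordering

section CentralReflections

variable {r : Fin 3 → ℕ}

/- Bring the entries with indices `j i` to the front of their legs, reflect at the central vertex,
and move them back. -/
lemma exists_inWOrbit_sigmaSeq_sub (v : StarVertex r → ℤ) (j : Fin 3 → ℕ) (hj : ∀ i, j i ≤ r i)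
    {c : ℤ} (hc : c = ∑ i, sigmaSeq v i (j i) - v none) :
    ∃ w, InWOrbit v w ∧ w none = v none - c ∧
      ∀ i s, sigmaSeq w i s = sigmaSeq v i s - if s = j i then c else 0 := by
  let π (i : Fin 3) : Equiv.Perm (Fin (r i + 1)) := Equiv.swap 0 ⟨j i, by have := hj i; omega⟩
  obtain ⟨x, hvx, hx⟩ := exists_inHOrbit_sigmaSeq_perm π v
  have hδ : deltaInv x = -c := by
    have hfirst (i : Fin 3) : sigmaSeq x i 0 = sigmaSeq v i (j i) := by
      have h := hx i 0
      rwa [Equiv.swap_apply_left] at h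
    simp only [deltaInv_eq, hvx.apply_none, hfirst]
    omega
  obtain ⟨w, hxw, hw⟩ := exists_inHOrbit_sigmaSeq_perm π (reflAt none x)
  refine ⟨w, (hvx.inWOrbit.reflAt none).trans hxw.inWOrbit, ?_, fun i s ↦ ?_⟩
  · rw [hxw.apply_none, reflAt_apply, pairing_none, hδ, hvx.apply_none, if_pos rfl, neg_neg]
  rcases le_or_gt s (r i) with hs | hs
  · have hfront : ((π i ⟨s, by omega⟩ : Fin (r i + 1)) : ℕ) = 0 ↔ s = j i := by
      rw [Fin.val_eq_zero_iff, Equiv.swap_apply_eq_iff, Equiv.swap_apply_left, Fin.mk.injEq]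
    have hback := hw i ⟨s, by omega⟩
    rw [sigmaSeq_reflAt_none, hx, Equiv.swap_apply_self, hδ] at hback
    simp only [hfront] at hback
    rw [hback]
    split_ifs <;> simp [sub_eq_add_neg]
  · rw [sigmaSeq_eq_zero_of_lt w hs, sigmaSeq_eq_zero_of_lt v hs,
      if_neg (by have := hj i; omega), sub_zero]

/- The central coordinate and the entry `t` of the third leg drop by the same amount in each step,
so the amounts `c s` can all be computed from `v`. -/
lemma exists_inWOrbit_sigmaSeq_sub_of_forall_mem (v : StarVertex r → ℤ) {S : Finset ℕ} {t : ℕ}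
    (hS : ∀ i ≠ 2, ∀ s ∈ S, s ≤ r i) (ht : t ≤ r 2) {c : ℕ → ℤ}
    (hc : ∀ s ∈ S, c s = sigmaSeq v 0 s + sigmaSeq v 1 s + sigmaSeq v 2 t - v none) :
    ∃ w, InWOrbit v w ∧ w none = v none - ∑ s ∈ S, c s ∧
      (∀ i ≠ 2, ∀ s, sigmaSeq w i s = sigmaSeq v i s - if s ∈ S then c s else 0) ∧
      ∀ s, sigmaSeq w 2 s = sigmaSeq v 2 s - if s = t then ∑ s ∈ S, c s else 0 := by
  induction S using Finset.induction_on with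
  | empty => exact ⟨v, .refl v, by simp⟩
  | insert a S ha ih =>
    simp only [Finset.forall_mem_insert] at hS hc
    obtain ⟨x, hvx, hx, hxi, hx₂⟩ := ih (fun i hi ↦ (hS i hi).2) hc.2
    let j (i : Fin 3) : ℕ := if i = 2 then t else a
    have hj (i : Fin 3) : j i ≤ r i := by
      by_cases hi : i = 2
      · simpa [j, hi] using ht
      · simpa [j, hi] using (hS i hi).1
    have hca : c a = ∑ i, sigmaSeq x i (j i) - x none := by
      simp only [Fin.sum_univ_three, j, Fin.reduceEq, if_true, if_false, hx, hx₂, hc.1,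
        hxi 0 (by decide), hxi 1 (by decide), ha, sub_zero]
      ring
    obtain ⟨w, hxw, hw, hws⟩ := exists_inWOrbit_sigmaSeq_sub x j hj hca
    refine ⟨w, hvx.trans hxw, ?_, fun i hi s ↦ ?_, fun s ↦ ?_⟩
    · rw [hw, hx, Finset.sum_insert ha]
      ring
    · rw [hws, hxi i hi]
      by_cases hs : s = a
      · simp [j, hi, hs, ha]
      · simp [j, hi, hs]
    · rw [hws, hx₂, Finset.sum_insert ha]
      by_cases hs : s = t
      · simp only [j, hs, if_true]
        ring
      · simp [j, hs]

end CentralReflections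

section DimVec

lemma PartitionOf.sum_range_of_len_le {n m : ℕ} (μ : PartitionOf n) (hm : μ.len ≤ m) :
    ∑ s ∈ Finset.range m, μ.parts s = n := by
  refine .trans (.symm <| Finset.sum_subset (by simpa using hm) fun s _ hs ↦ ?_) μ.sum_parts
  exact μ.zero_of_le s (by simpa using hs)

lemma coord_dimVec {r : Fin 3 → ℕ} {n : ℕ} (μ : Fin 3 → PartitionOf n) {i : Fin 3}
    (hlen : (μ i).len ≤ r i + 1) (j : ℕ) :
    coord (dimVec r n fun i ↦ (μ i).parts) i j
      = n - ∑ s ∈ Finset.range j, ((μ i).parts s : ℤ) := by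
  rcases j with _ | j
  · simp [coord, dimVec]
  · by_cases hj : j < r i
    · simp [coord, dimVec, hj]
    · rw [coord_eq_zero_of_lt _ (by omega), ← Nat.cast_sum,
        (μ i).sum_range_of_len_le (by omega), sub_self]

lemma sigmaSeq_dimVec {r : Fin 3 → ℕ} {n : ℕ} (μ : Fin 3 → PartitionOf n) {i : Fin 3}
    (hlen : (μ i).len ≤ r i + 1) (s : ℕ) :
    sigmaSeq (dimVec r n fun i ↦ (μ i).parts) i s = (μ i).parts s := by
  rw [sigmaSeq, coord_dimVec μ hlen, coord_dimVec μ hlen, Finset.sum_range_succ]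
  ring

lemma inNStarStar_dimVec {r : Fin 3 → ℕ} {n : ℕ} (μ : Fin 3 → PartitionOf n)
    (hlen : ∀ i, (μ i).len ≤ r i + 1) : InNStarStar (dimVec r n fun i ↦ (μ i).parts) := by
  refine ⟨inNStar_iff_sigmaSeq_nonneg.2 fun i s ↦ ?_, fun i s ↦ ?_⟩
  · rw [sigmaSeq_dimVec μ (hlen i)]
    exact Nat.cast_nonneg _
  · rw [sigmaSeq_dimVec μ (hlen i), sigmaSeq_dimVec μ (hlen i)]
    exact_mod_cast (μ i).antitone s

/-- The staircase partition `ξ_d = (d, d - 1, …, 1)` on the first two legs; parts are indexed from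
`0`, and the truncated subtraction in `d - s` makes them vanish from `s = d` on. -/
def staircase (d : ℕ) : PartitionOf (d * (d + 1) / 2) where
  parts s := d - s
  antitone s := by omega
  len := d
  pos_of_lt s hs := by omega
  zero_of_le s hs := by omega
  sum_parts := by
    calc ∑ s ∈ Finset.range d, (d - s) = ∑ s ∈ Finset.range d, (d - 1 - s + 1) :=
          Finset.sum_congr rfl fun s hs ↦ by
            have := Finset.mem_range.1 hs
            omega
      _ = ∑ s ∈ Finset.range d, (s + 1) := Finset.sum_range_reflect (fun s ↦ s + 1) d
      _ = ∑ s ∈ Finset.range (d + 1), s := by rw [Finset.sum_range_succ', add_zero]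
      _ = d * (d + 1) / 2 := by rw [Finset.sum_range_id, Nat.add_sub_cancel, mul_comm]

end DimVec

section Staircase

variable {r : Fin 3 → ℕ} {v : StarVertex r → ℤ} {d : ℕ}

lemma sum_range_sub_two_mul (k : ℤ) (m : ℕ) :
    ∑ s ∈ Finset.range m, (k - 2 * s) = m * (k - m + 1) := by
  induction m with
  | zero => simp
  | succ m ih =>
    rw [Finset.sum_range_succ, ih]
    push_cast
    ring

lemma exists_inWOrbit_of_staircase_legs (hr : ∀ i ≠ 2, d ≤ r i + 1)
    (hξ : ∀ i ≠ 2, ∀ s, sigmaSeq v i s = (staircase d).parts s) {k : ℤ}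
    (hk : k = 2 * d + sigmaSeq v 2 0 - v none) {m : ℕ} (hm : m ≤ d) :
    ∃ w, InWOrbit v w ∧ w none = v none - m * (k - m + 1) ∧
      (∀ i ≠ 2, ∀ s, sigmaSeq w i s = (staircase d).parts s - if s < m then k - 2 * s else 0) ∧
      ∀ s, sigmaSeq w 2 s = sigmaSeq v 2 s - if s = 0 then m * (k - m + 1) else 0 := by
  have hc : ∀ s ∈ Finset.range m,
      k - 2 * s = sigmaSeq v 0 s + sigmaSeq v 1 s + sigmaSeq v 2 0 - v none := by
    intro s hs
    have := Finset.mem_range.1 hs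
    rw [hξ 0 (by decide), hξ 1 (by decide), hk, staircase, Nat.cast_sub (by omega)]
    ring
  have hS : ∀ i ≠ 2, ∀ s ∈ Finset.range m, s ≤ r i := by
    intro i hi s hs
    have := hr i hi
    have := Finset.mem_range.1 hs
    omega
  obtain ⟨w, hvw, hw, hwξ, hw₂⟩ :=
    exists_inWOrbit_sigmaSeq_sub_of_forall_mem v hS (Nat.zero_le (r 2)) hc
  simp only [sum_range_sub_two_mul, Finset.mem_range] at hw hwξ hw₂
  exact ⟨w, hvw, hw, fun i hi s ↦ by rw [hwξ i hi, hξ i hi], hw₂⟩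

lemma staircase_sub_mem_Icc {k : ℤ} {m : ℕ} (hkd : k ≤ d) (hkm : k ≤ 2 * m) (hmk : 2 * m ≤ k + 1)
    (s : ℕ) :
    ((staircase d).parts s - if s < m then k - 2 * s else 0 : ℤ) ∈ Set.Icc 0 (d - m : ℤ) := by
  simp only [staircase, Set.mem_Icc]
  split_ifs <;> omega

lemma InNStar.isPosImaginaryRoot_of_staircase_legs_of_le (hv : InNStar v)
    (hr : ∀ i ≠ 2, d ≤ r i + 1) (hξ : ∀ i ≠ 2, ∀ s, sigmaSeq v i s = (staircase d).parts s) {k : ℤ}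
    (hk : k = 2 * d + sigmaSeq v 2 0 - v none) (hkd : k ≤ d) {m : ℕ} (hmd : m < d)
    (hkm : k ≤ 2 * m) (hmk : 2 * m ≤ k + 1)
    (hfirst : m * (k - m + 1) ≤ sigmaSeq v 2 0)
    (hrest : ∀ s ≠ 0, 2 * (d - m) + sigmaSeq v 2 s ≤ v none - m * (k - m + 1)) :
    IsPosImaginaryRoot v := by
  obtain ⟨w, hvw, hw, hwξ, hw₂⟩ :=
    exists_inWOrbit_of_staircase_legs hr hξ hk hmd.le
  have hIcc := staircase_sub_mem_Icc hkd hkm hmk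
  have hbounds (i : Fin 3) (s : ℕ) : 0 ≤ sigmaSeq w i s ∧
      sigmaSeq w i s ≤ if i = 2 then w none - 2 * (d - m) else d - m := by
    rcases ne_or_eq i 2 with hi | rfl
    · rw [hwξ i hi, if_neg hi]
      exact hIcc s
    rw [hw₂, hw, if_pos rfl]
    rcases eq_or_ne s 0 with rfl | hs
    · rw [if_pos rfl]
      constructor <;> linarith
    · rw [if_neg hs, sub_zero]
      exact ⟨inNStar_iff_sigmaSeq_nonneg.1 hv 2 s, by linarith [hrest s hs]⟩
  have hw₀ : w none ≠ 0 := by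
    have := hrest 1 one_ne_zero
    have := inNStar_iff_sigmaSeq_nonneg.1 hv 2 1
    omega
  refine hvw.isPosImaginaryRoot <| (inNStar_iff_sigmaSeq_nonneg.2 fun i s ↦ (hbounds i s).1)
    |>.isPosImaginaryRoot_of_sigmaSeq_le hw₀ (fun i s ↦ (hbounds i s).2) ?_
  simp only [Fin.sum_univ_three, Fin.reduceEq, if_true, if_false]
  linarith

/- Four reflections along the diagonal lead to `(3, 3, 2, 2, 1, 1)` on two legs and `(7, 5)` on the
third one; two more reflections lead to `(2, 2, 2, 2, 1, 1)` and `(5, 5)`. -/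
lemma isPosImaginaryRoot_of_staircase_seven_legs (hr : ∀ i ≠ 2, 7 ≤ r i + 1)
    (hξ : ∀ i ≠ 2, ∀ s, sigmaSeq v i s = (staircase 7).parts s) (hN : v none = 28)
    (h₂ : sigmaSeq v 2 0 = 21) {t : ℕ} (ht : t ≠ 0) (hvt : sigmaSeq v 2 t = 7)
    (hv : ∀ s, s ≠ 0 → s ≠ t → sigmaSeq v 2 s = 0) : IsPosImaginaryRoot v := by
  have htr : t ≤ r 2 := by
    by_contra! h
    simp [sigmaSeq_eq_zero_of_lt v h] at hvt
  obtain ⟨x, hvx, hx, hxξ, hx₂⟩ :=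
    exists_inWOrbit_of_staircase_legs (k := 7) (m := 4) hr hξ (by simp [hN, h₂]) (by simp)
  have hS : ∀ i ≠ 2, ∀ s ∈ ({3, 4} : Finset ℕ), s ≤ r i := by
    intro i hi s hs
    have := hr i hi
    simp only [Finset.mem_insert, Finset.mem_singleton] at hs
    omega
  have hc : ∀ s ∈ ({3, 4} : Finset ℕ),
      1 = sigmaSeq x 0 s + sigmaSeq x 1 s + sigmaSeq x 2 t - x none := by
    simp [hx, hxξ, hx₂, ht, hvt, hN, staircase]
  obtain ⟨w, hxw, hw, hwξ, hw₂⟩ :=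
    exists_inWOrbit_sigmaSeq_sub_of_forall_mem x (c := fun _ ↦ 1) hS htr hc
  have hbounds (i : Fin 3) (s : ℕ) :
      0 ≤ sigmaSeq w i s ∧ sigmaSeq w i s ≤ if i = 2 then 5 else 2 := by
    rcases ne_or_eq i 2 with hi | rfl
    · simp only [hwξ i hi, hxξ i hi, staircase, if_neg hi, Finset.mem_insert, Finset.mem_singleton]
      split_ifs <;> omega
    · rw [hw₂, hx₂]
      rcases eq_or_ne s 0 with rfl | hs
      · simp [h₂, ht.symm]
      rcases eq_or_ne s t with rfl | hst
      · simp [hs, hvt]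
      · simp [hs, hst, hv s hs hst]
  have hwN : w none = 10 := by simp [hw, hx, hN]
  refine (hvx.trans hxw).isPosImaginaryRoot <|
    (inNStar_iff_sigmaSeq_nonneg.2 fun i s ↦ (hbounds i s).1)
    |>.isPosImaginaryRoot_of_sigmaSeq_le (by omega) (fun i s ↦ (hbounds i s).2) ?_
  simp [Fin.sum_univ_three, hwN]

/- For fixed parity of `k` and largest `b`, the difference of the two sides is concave in `m`, so
only `m = 1` and the largest possible `m` matter; the latter is where `d = 7` fails. -/
lemma two_mul_staircase_excess_le {d k m b : ℤ} (hd : 7 ≤ d) (hkd : k ≤ d) (hm : 1 ≤ m)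
    (hkm : k ≤ 2 * m) (hmk : 2 * m ≤ k + 1) (hb : b ≤ 2 * d - k)
    (h7 : ¬(d = 7 ∧ k = 7 ∧ b = 7)) :
    2 * (2 * (d - m) + b + m * (k - m + 1)) ≤ d * (d + 1) := by
  obtain rfl | hd8 := hd.eq_or_lt
  · have hm4 : m ≤ 4 := by omega
    interval_cases m <;> omega
  · obtain rfl | rfl : k = 2 * m ∨ k = 2 * m - 1 := by omega
    · nlinarith [mul_nonneg (sub_nonneg.2 hm) (sub_nonneg.2 hkd)]
    · nlinarith [mul_nonneg (sub_nonneg.2 hm) (sub_nonneg.2 hkd)]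

lemma InNStarStar.isPosImaginaryRoot_of_staircase_legs (hv : InNStarStar v) (hd : 7 ≤ d)
    (hN : 2 * v none = d * (d + 1)) (hr : ∀ i ≠ 2, d ≤ r i + 1)
    (hξ : ∀ i ≠ 2, ∀ s, sigmaSeq v i s = (staircase d).parts s)
    (hle : sigmaSeq v 2 0 ≤ v none - d) : IsPosImaginaryRoot v := by
  rcases le_or_gt (2 * d + sigmaSeq v 2 0) (v none) with hδ | hδ
  · refine ⟨v, hv.isFundImaginary (by nlinarith) ?_, .refl v⟩
    rw [deltaInv_eq, Fin.sum_univ_three, hξ 0 (by decide), hξ 1 (by decide)]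
    simp only [staircase, Nat.sub_zero]
    linarith
  by_cases h7 : d = 7 ∧ sigmaSeq v 2 0 = 21 ∧ ∃ t ≠ 0, sigmaSeq v 2 t = 7
  · obtain ⟨rfl, h₂, t, ht, hvt⟩ := h7
    refine isPosImaginaryRoot_of_staircase_seven_legs hr hξ (by omega) h₂ ht hvt fun s hs hst ↦ ?_
    have hthree := hv.1.sum_sigmaSeq_le 2 {0, t, s}
    rw [Finset.sum_insert (by simp [ht.symm, hs.symm]), Finset.sum_pair hst.symm] at hthree
    have := inNStar_iff_sigmaSeq_nonneg.1 hv.1 2 s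
    push_cast at hN
    linarith
  obtain ⟨k, hk⟩ : ∃ k, k = 2 * d + sigmaSeq v 2 0 - v none := ⟨_, rfl⟩
  obtain ⟨m, hm⟩ : ∃ m : ℕ, (m : ℤ) = (k + 1) / 2 := ⟨_, Int.toNat_of_nonneg (by omega)⟩
  have hmd : (m : ℤ) < d := by omega
  have hexcess {b : ℤ} (hb : b ≤ 2 * d - k) (h7 : ¬((d : ℤ) = 7 ∧ k = 7 ∧ b = 7)) :=
    two_mul_staircase_excess_le (m := m) (by exact_mod_cast hd) (by omega) (by omega) (by omega)
      (by omega) hb h7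
  refine hv.1.isPosImaginaryRoot_of_staircase_legs_of_le hr hξ hk (m := m) (by omega) (by omega)
    (by omega) (by omega) ?_ fun s hs ↦ ?_
  · linarith [hexcess (b := 2 * d - k - 1) (by omega) (by omega)]
  · have htwo := hv.1.sum_sigmaSeq_le 2 {0, s}
    rw [Finset.sum_pair hs.symm] at htwo
    have hregular : ¬((d : ℤ) = 7 ∧ k = 7 ∧ sigmaSeq v 2 s = 7) := by
      rintro ⟨hd7, hk7, hs7⟩
      rw [hd7] at hN hk
      exact h7 ⟨by omega, by omega, s, hs, hs7⟩
    linarith [hexcess (by omega) hregular]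

end Staircase

theorem staircase_dimVec_imaginary_of_between_general {d n : ℕ} (hd : 7 ≤ d)
    (hn : n = d * (d + 1) / 2) (τ : PartitionOf n) (hτ : (τ.parts 0 : ℤ) ≤ n - d)
    {r : Fin 3 → ℕ} (hr : ∀ i ≠ 2, d ≤ r i + 1) (hlen : τ.len ≤ r 2 + 1) :
    IsPosImaginaryRoot (dimVec r n ![fun s ↦ d - s, fun s ↦ d - s, τ.parts]) := by
  subst hn
  let μ : Fin 3 → PartitionOf (d * (d + 1) / 2) := ![staircase d, staircase d, τ]
  have hμ : ![fun s ↦ d - s, fun s ↦ d - s, τ.parts] = fun i ↦ (μ i).parts := by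
    funext i
    fin_cases i <;> rfl
  have hμξ : ∀ i ≠ 2, μ i = staircase d := by
    intro i hi
    fin_cases i
    exacts [rfl, rfl, absurd rfl hi]
  have hμlen (i : Fin 3) : (μ i).len ≤ r i + 1 := by
    rcases ne_or_eq i 2 with hi | rfl
    · rw [hμξ i hi]
      exact hr i hi
    · exact hlen
  rw [hμ]
  refine (inNStarStar_dimVec μ hμlen).isPosImaginaryRoot_of_staircase_legs hd ?_ hr
    (fun i hi s ↦ ?_) ?_
  · change 2 * ((d * (d + 1) / 2 : ℕ) : ℤ) = d * (d + 1)
    exact_mod_cast Nat.two_mul_div_two_of_even (Nat.even_mul_succ_self d)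
  · rw [sigmaSeq_dimVec μ (hμlen i), hμξ i hi]
  · rw [sigmaSeq_dimVec μ (hμlen 2)]
    exact hτ

/-- If `d ≥ 7` and `n - 2d < τ₁ ≤ n - d` then the dimension vector of
`(ξ_d, ξ_d, τ)` is a positive imaginary root of `Γ_𝛕`: it is of the form `w(v)`
with `w` in the Weyl group and `v` a fundamental imaginary root. -/
theorem staircase_dimVec_imaginary_of_between (d : ℕ) (hd : 7 ≤ d) (n : ℕ)
    (hn : n = d * (d + 1) / 2) (τ : PartitionOf n)
    (hτ₁ : (n : ℤ) - 2 * d < (τ.parts 0 : ℤ))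
    (hτ₂ : (τ.parts 0 : ℤ) ≤ (n : ℤ) - d) :
    ∃ v : StarVertex ![d - 1, d - 1, τ.len - 1] → ℤ,
      IsFundImaginary v ∧
      InWOrbit v
        (dimVec ![d - 1, d - 1, τ.len - 1] n
          ![fun s => d - s, fun s => d - s, τ.parts]) := by
  have hr : ∀ i ≠ 2, d ≤ ![d - 1, d - 1, τ.len - 1] i + 1 := by
    intro i hi
    fin_cases i
    exacts [le_tsub_add, le_tsub_add, absurd rfl hi]
  exact staircase_dimVec_imaginary_of_between_general hd hn τ hτ₂ hr le_tsub_add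
end

section
/- Let m ≥ 0 and let μ be a partition of 2m + 1 with μ ⊴ (m+1, m) (equivalently μ₁ ≤ m + 1). Then there exists a partition λ of 2m with λ ⊴ (m, m) such that μ is obtained from λ by adding a single box; that is, there is an index i₀ with μ_{i₀} = λ_{i₀} + 1 and μ_i = λ_i for all i ≠ i₀. -/
/-!
From `2 μ₂ ≤ μ₁ + μ₂ ≤ 2m + 1` we get `μ₂ ≤ m`. If `μ₂ < μ₁`, remove a box from the first row, so
that its length drops to at most `m`; otherwise `μ₁ = μ₂ ≤ m` already, and any removable box will
do.
-/

lemma antitone_update_pred {f : ℕ → ℕ} (hf : Antitone f) {i : ℕ} (hi : f (i + 1) < f i) :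
    Antitone (Function.update f i (f i - 1)) := by
  refine antitone_nat_of_succ_le fun j => ?_
  have hj : f (j + 1) ≤ f j := hf j.le_succ
  grind [Function.update_apply]

lemma sum_update_pred {ι : Type*} [DecidableEq ι] {s : Finset ι} {f : ι → ℕ} {i : ι}
    (his : i ∈ s) (hi : 0 < f i) :
    ∑ j ∈ s, Function.update f i (f i - 1) j + 1 = ∑ j ∈ s, f j := by
  rw [Finset.sum_update_of_mem his, ← Finset.erase_eq, ← Finset.add_sum_erase s f his]
  omega

namespace PartitionOf

variable {n : ℕ}

/-- The partition with parts `f 0 ≥ f 1 ≥ ⋯`, for a sequence with `f N = 0`. It spares the user from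
computing the length, which is taken to be the first index where `f` vanishes. -/
def ofAntitone (f : ℕ → ℕ) (hf : Antitone f) {N : ℕ} (hN : f N = 0)
    (hsum : ∑ j ∈ Finset.range N, f j = n) : PartitionOf n :=
  have hex : ∃ k, f k = 0 := ⟨N, hN⟩
  have hzero : ∀ j, Nat.find hex ≤ j → f j = 0 := fun _ hj =>
    Nat.eq_zero_of_le_zero ((hf hj).trans_eq (Nat.find_spec hex))
  { parts := f
    antitone := fun j => hf j.le_succ
    len := Nat.find hex
    pos_of_lt := fun _ hj => Nat.pos_of_ne_zero (Nat.find_min hex hj)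
    zero_of_le := hzero
    sum_parts := (Finset.eventually_constant_sum hzero (Nat.find_min' hex hN)).symm.trans hsum }

lemma antitone_parts (μ : PartitionOf n) : Antitone μ.parts :=
  antitone_nat_of_succ_le μ.antitone

lemma sum_range_parts_le (μ : PartitionOf n) (k : ℕ) : ∑ j ∈ Finset.range k, μ.parts j ≤ n :=
  calc ∑ j ∈ Finset.range k, μ.parts j
      ≤ ∑ j ∈ Finset.range (max k μ.len), μ.parts j :=
        Finset.sum_le_sum_of_subset (Finset.range_mono (le_max_left k μ.len))
    _ = ∑ j ∈ Finset.range μ.len, μ.parts j :=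
        Finset.eventually_constant_sum μ.zero_of_le (le_max_right k μ.len)
    _ = n := μ.sum_parts

lemma succ_mul_parts_le (μ : PartitionOf n) (k : ℕ) : (k + 1) * μ.parts k ≤ n :=
  calc (k + 1) * μ.parts k
      = ∑ _j ∈ Finset.range (k + 1), μ.parts k := by simp
    _ ≤ ∑ j ∈ Finset.range (k + 1), μ.parts j :=
        Finset.sum_le_sum fun _ hj => μ.antitone_parts (Finset.mem_range_succ_iff.mp hj)
    _ ≤ n := μ.sum_range_parts_le (k + 1)

lemma lt_len_of_parts_pos (μ : PartitionOf n) {i : ℕ} (hi : 0 < μ.parts i) : i < μ.len :=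
  not_le.mp fun h => hi.ne' (μ.zero_of_le i h)

lemma exists_parts_succ_lt (μ : PartitionOf (n + 1)) : ∃ i, μ.parts (i + 1) < μ.parts i := by
  by_contra! h
  have hmono : Monotone μ.parts := monotone_nat_of_le_succ h
  have hzero (j : ℕ) : μ.parts j = 0 :=
    Nat.eq_zero_of_le_zero ((hmono (le_max_left j μ.len)).trans_eq
      (μ.zero_of_le _ (le_max_right j μ.len)))
  simpa [hzero] using μ.sum_parts

/-- Removal of the last box of row `i` (rows being counted from `0`), which leaves a partition when
row `i` is strictly longer than the next one. -/
def removeBox (μ : PartitionOf (n + 1)) (i : ℕ) (hi : μ.parts (i + 1) < μ.parts i) :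
    PartitionOf n :=
  have hlen : i < μ.len := μ.lt_len_of_parts_pos (Nat.zero_lt_of_lt hi)
  ofAntitone (Function.update μ.parts i (μ.parts i - 1))
    (antitone_update_pred μ.antitone_parts hi)
    (N := μ.len)
    (by rw [Function.update_of_ne hlen.ne', μ.zero_of_le _ le_rfl])
    (Nat.succ_injective <|
      (sum_update_pred (Finset.mem_range.mpr hlen) (Nat.zero_lt_of_lt hi)).trans μ.sum_parts)

section removeBox

variable (μ : PartitionOf (n + 1)) {i : ℕ} (hi : μ.parts (i + 1) < μ.parts i)

lemma removeBox_parts_self_add_one : (μ.removeBox i hi).parts i + 1 = μ.parts i := by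
  simp only [removeBox, ofAntitone, Function.update_self]
  omega

lemma removeBox_parts_of_ne {j : ℕ} (hj : j ≠ i) : (μ.removeBox i hi).parts j = μ.parts j :=
  Function.update_of_ne hj _ _

lemma removeBox_parts_le (j : ℕ) : (μ.removeBox i hi).parts j ≤ μ.parts j := by
  rcases eq_or_ne j i with rfl | hj
  · exact (Nat.le_succ _).trans_eq (μ.removeBox_parts_self_add_one hi)
  · exact (μ.removeBox_parts_of_ne hi hj).le

end removeBox

lemma exists_removeBox_parts_zero_le {m : ℕ} (μ : PartitionOf (n + 1))
    (h₀ : μ.parts 0 ≤ m + 1) (h₁ : μ.parts 1 ≤ m) :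
    ∃ (i : ℕ) (hi : μ.parts (i + 1) < μ.parts i), (μ.removeBox i hi).parts 0 ≤ m := by
  rcases lt_or_ge (μ.parts 1) (μ.parts 0) with hlt | hle
  · refine ⟨0, hlt, Nat.le_of_succ_le_succ ?_⟩
    exact (μ.removeBox_parts_self_add_one hlt).trans_le h₀
  · obtain ⟨i, hi⟩ := μ.exists_parts_succ_lt
    exact ⟨i, hi, (μ.removeBox_parts_le hi 0).trans (hle.trans h₁)⟩

end PartitionOf

theorem exists_single_box_pred_general {n m : ℕ} (μ : PartitionOf (n + 1))
    (h₀ : μ.parts 0 ≤ m + 1) (h₁ : μ.parts 1 ≤ m) :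
    ∃ lam : PartitionOf n, lam.parts 0 ≤ m ∧
      ∃ i₀ : ℕ, μ.parts i₀ = lam.parts i₀ + 1 ∧
        ∀ i : ℕ, i ≠ i₀ → μ.parts i = lam.parts i := by
  obtain ⟨i, hi, hle⟩ := μ.exists_removeBox_parts_zero_le h₀ h₁
  exact ⟨μ.removeBox i hi, hle, i, (μ.removeBox_parts_self_add_one hi).symm,
    fun _ hj => (μ.removeBox_parts_of_ne hi hj).symm⟩

/-- Every partition `μ` of `2m + 1` dominated by `(m+1, m)` (i.e. with
`μ₁ ≤ m + 1`) is obtained from a partition `λ` of `2m` dominated by `(m, m)` by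
adding a single box. -/
theorem exists_single_box_pred (m : ℕ) (μ : PartitionOf (2 * m + 1))
    (hμ : μ.parts 0 ≤ m + 1) :
    ∃ lam : PartitionOf (2 * m), lam.parts 0 ≤ m ∧
      ∃ i₀ : ℕ, μ.parts i₀ = lam.parts i₀ + 1 ∧
        ∀ i : ℕ, i ≠ i₀ → μ.parts i = lam.parts i := by
  have h₁ : 2 * μ.parts 1 ≤ 2 * m + 1 := μ.succ_mul_parts_le 1
  exact exists_single_box_pred_general μ hμ (by omega)
end

section
/- Let k ≥ 0 and let μ be a partition of 2k + 1 with μ₁ ≤ k + 1. Then there exists a sequence of partitions ∅ = λ⁰, λ¹, …, λ^k, λ^{k+1} = μ such that for every 0 ≤ j ≤ k one has |λ^j| = 2j and λ^j_1 ≤ j, for every 0 ≤ j < k the partition λ^{j+1} is obtained from λ^j by adding two boxes no two in the same row (λ^j_i ≤ λ^{j+1}_i ≤ λ^j_i + 1 for all i), and μ is obtained from λ^k by adding a single box. -/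
/-!
The chain is built downwards from `μ`. A partition with parts at most `c + 1` loses a vertical
strip of `r` boxes and ends up with parts at most `c` as soon as it has at least `r` rows, of which
at most `r` have length `c + 1`: remove one box from each row of length `c + 1` and the remaining
boxes from the last rows. A partition of `r * (c + 1)` with parts at most `c + 1` satisfies both
conditions by counting boxes, so the removal can be iterated; so does a partition of `2 * c + 1`
with parts at most `c + 1` for `r = 1`, which gives the single box at the top of the chain.
-/

namespace PartitionOf

variable {m n : ℕ}

theorem parts_antitone (ν : PartitionOf n) : Antitone ν.parts :=
  antitone_nat_of_succ_le ν.antitone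

theorem sum_range_parts (ν : PartitionOf n) {L : ℕ} (hL : ν.len ≤ L) :
    ∑ i ∈ Finset.range L, ν.parts i = n := by
  rw [Finset.eventually_constant_sum ν.zero_of_le hL, ν.sum_parts]

theorem sum_range_parts_le_s13 (ν : PartitionOf n) (L : ℕ) :
    ∑ i ∈ Finset.range L, ν.parts i ≤ n :=
  calc ∑ i ∈ Finset.range L, ν.parts i
      ≤ ∑ i ∈ Finset.range (max ν.len L), ν.parts i :=
        Finset.sum_le_sum_of_subset (Finset.range_mono (le_max_right _ _))
    _ = n := ν.sum_range_parts (le_max_left _ _)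

theorem succ_mul_parts_le_s13 (ν : PartitionOf n) (i : ℕ) : (i + 1) * ν.parts i ≤ n :=
  calc (i + 1) * ν.parts i
      = ∑ _j ∈ Finset.range (i + 1), ν.parts i := by simp
    _ ≤ ∑ j ∈ Finset.range (i + 1), ν.parts j :=
        Finset.sum_le_sum fun _ hj => ν.parts_antitone (Finset.mem_range_succ_iff.mp hj)
    _ ≤ n := ν.sum_range_parts_le_s13 _

theorem le_len_mul_parts_zero (ν : PartitionOf n) : n ≤ ν.len * ν.parts 0 :=
  calc n = ∑ i ∈ Finset.range ν.len, ν.parts i := ν.sum_parts.symm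
    _ ≤ ∑ _i ∈ Finset.range ν.len, ν.parts 0 :=
        Finset.sum_le_sum fun i _ => ν.parts_antitone i.zero_le
    _ = ν.len * ν.parts 0 := by simp

theorem exists_parts_eq {f : ℕ → ℕ} (hf : Antitone f) {L : ℕ} (hL : ∀ i, L ≤ i → f i = 0)
    (hsum : ∑ i ∈ Finset.range L, f i = n) : ∃ ν : PartitionOf n, ν.parts = f := by
  have hzero : ∃ l, f l = 0 := ⟨L, hL L le_rfl⟩
  have hfind : ∀ i, Nat.find hzero ≤ i → f i = 0 := fun i hi =>
    Nat.le_zero.mp ((hf hi).trans (Nat.find_spec hzero).le)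
  refine ⟨⟨f, fun i => hf i.le_succ, Nat.find hzero,
    fun i hi => Nat.pos_of_ne_zero (Nat.find_min hzero hi), hfind, ?_⟩, rfl⟩
  rw [← hsum, Finset.eventually_constant_sum hfind (Nat.find_min' hzero (hL L le_rfl))]

instance : Nonempty (PartitionOf n) := by
  have hanti : Antitone fun i : ℕ => if i = 0 then n else 0 :=
    antitone_nat_of_succ_le fun i => by simp
  exact (exists_parts_eq (L := 1) hanti (fun i hi => if_neg (Nat.one_le_iff_ne_zero.mp hi))
    (by simp)).nonempty

/-- `μ` is obtained from `lam` by adding boxes no two of which lie in the same row, that is,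
the skew shape `μ / lam` is a vertical strip. Its size `n - m` is carried by the types. -/
def IsVerticalStrip (lam : PartitionOf m) (μ : PartitionOf n) : Prop :=
  ∀ i, lam.parts i ≤ μ.parts i ∧ μ.parts i ≤ lam.parts i + 1

theorem exists_box_of_parts_le {lam : PartitionOf n} {μ : PartitionOf (n + 1)}
    (h : ∀ i, lam.parts i ≤ μ.parts i) :
    ∃ i₀, μ.parts i₀ = lam.parts i₀ + 1 ∧ ∀ i, i ≠ i₀ → μ.parts i = lam.parts i := by
  have hsum_lam := lam.sum_range_parts (le_max_left lam.len μ.len)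
  have hsum_μ := μ.sum_range_parts (le_max_right lam.len μ.len)
  obtain ⟨i₀, hi₀, hlt⟩ := Finset.exists_lt_of_sum_lt (hsum_lam.trans_lt
    (n.lt_succ_self.trans_eq hsum_μ.symm))
  have hle : ∀ i, (lam.parts i + if i₀ = i then 1 else 0) ≤ μ.parts i := fun i => by
    split_ifs with hi
    exacts [hi ▸ hlt, h i]
  have hsum : ∑ i ∈ Finset.range (max lam.len μ.len), (lam.parts i + if i₀ = i then 1 else 0) =
      ∑ i ∈ Finset.range (max lam.len μ.len), μ.parts i := by
    rw [Finset.sum_add_distrib, Finset.sum_ite_eq, if_pos hi₀, hsum_lam, hsum_μ]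
  have heq := (Finset.sum_eq_sum_iff_of_le fun i _ => hle i).mp hsum
  refine ⟨i₀, by simpa using (heq i₀ hi₀).symm, fun i hi => ?_⟩
  rcases lt_or_ge i (max lam.len μ.len) with hiL | hiL
  · simpa [hi.symm] using (heq i (Finset.mem_range.mpr hiL)).symm
  · rw [μ.zero_of_le i (le_of_max_le_right hiL), lam.zero_of_le i (le_of_max_le_left hiL)]

theorem exists_parts_eq_add_ite {r : ℕ} (ν : PartitionOf (n + r)) {S : Finset ℕ}
    (hlen : ∀ i ∈ S, i < ν.len) (hcard : S.card = r)
    (hS : ∀ i ∈ S, ν.parts (i + 1) = ν.parts i → i + 1 ∈ S) :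
    ∃ ρ : PartitionOf n, ∀ i, ν.parts i = ρ.parts i + if i ∈ S then 1 else 0 := by
  have hpos : ∀ i, (if i ∈ S then 1 else 0) ≤ ν.parts i := fun i => by
    split_ifs with hi
    exacts [ν.pos_of_lt i (hlen i hi), Nat.zero_le _]
  have hanti : Antitone fun i => ν.parts i - if i ∈ S then 1 else 0 :=
    antitone_nat_of_succ_le fun i => by
      have hnext := ν.antitone i
      have hclosed := hS i
      grind
  have hsum : ∑ i ∈ Finset.range ν.len, (ν.parts i - if i ∈ S then 1 else 0) = n := by
    have hS_sub : S ⊆ Finset.range ν.len := fun i hi => Finset.mem_range.mpr (hlen i hi)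
    rw [Finset.sum_tsub_distrib _ fun i _ => hpos i, ν.sum_parts, Finset.sum_ite_mem,
      Finset.inter_eq_right.mpr hS_sub, ← Finset.card_eq_sum_ones, hcard, Nat.add_sub_cancel]
  obtain ⟨ρ, hρ⟩ := exists_parts_eq hanti
    (fun i hi => by rw [ν.zero_of_le i hi, Nat.zero_sub]) hsum
  exact ⟨ρ, fun i => by rw [hρ, Nat.sub_add_cancel (hpos i)]⟩

theorem exists_isVerticalStrip_of_parts_lt {a r : ℕ} (ν : PartitionOf (n + r))
    (hlen : r ≤ ν.len) (har : a ≤ r) (ha : ∀ i < a, ν.parts a < ν.parts i) :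
    ∃ ρ : PartitionOf n, ρ.IsVerticalStrip ν ∧ ∀ i < a, ν.parts i = ρ.parts i + 1 := by
  let S : Finset ℕ := Finset.range a ∪ Finset.Ico (ν.len + a - r) ν.len
  have mem_S : ∀ i, i ∈ S ↔ i < a ∨ ν.len + a - r ≤ i ∧ i < ν.len := fun i => by
    simp only [S, Finset.mem_union, Finset.mem_range, Finset.mem_Ico]
  have hS_len : ∀ i ∈ S, i < ν.len := fun i hi => by
    rw [mem_S] at hi
    omega
  have hS_card : S.card = r := by
    have hdisj : Disjoint (Finset.range a) (Finset.Ico (ν.len + a - r) ν.len) :=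
      Finset.disjoint_left.mpr fun i hi hi' => by
        rw [Finset.mem_range] at hi
        rw [Finset.mem_Ico] at hi'
        omega
    rw [Finset.card_union_of_disjoint hdisj, Finset.card_range, Nat.card_Ico]
    omega
  have hS_closed : ∀ i ∈ S, ν.parts (i + 1) = ν.parts i → i + 1 ∈ S := fun i hi heq => by
    rw [mem_S] at hi ⊢
    rcases hi with hi | ⟨hi, hi'⟩
    · refine Or.inl (lt_of_le_of_ne hi ?_)
      rintro rfl
      exact (ha i hi).ne heq
    · refine Or.inr ⟨by omega, lt_of_not_ge fun hend => ?_⟩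
      exact (ν.pos_of_lt i hi').ne' (heq ▸ ν.zero_of_le _ hend)
  obtain ⟨ρ, hρ⟩ := ν.exists_parts_eq_add_ite hS_len hS_card hS_closed
  refine ⟨ρ, fun i => by rw [hρ i]; split_ifs <;> omega, fun i hi => ?_⟩
  rw [hρ i, if_pos ((mem_S i).mpr (Or.inl hi))]

theorem exists_isVerticalStrip_parts_zero_le {r c : ℕ} (ν : PartitionOf (n + r))
    (hlen : r ≤ ν.len) (h0 : ν.parts 0 ≤ c + 1) (hr : ν.parts r ≤ c) :
    ∃ ρ : PartitionOf n, ρ.parts 0 ≤ c ∧ ρ.IsVerticalStrip ν := by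
  obtain ⟨a, har, hac, hca⟩ : ∃ a ≤ r, ν.parts a ≤ c ∧ ∀ i < a, c < ν.parts i :=
    have hex : ∃ i, ν.parts i ≤ c := ⟨r, hr⟩
    ⟨Nat.find hex, Nat.find_min' hex hr, Nat.find_spec hex,
      fun i hi => not_le.mp (Nat.find_min hex hi)⟩
  obtain ⟨ρ, hstrip, htop⟩ := ν.exists_isVerticalStrip_of_parts_lt hlen har
    fun i hi => hac.trans_lt (hca i hi)
  refine ⟨ρ, ?_, hstrip⟩
  rcases Nat.eq_zero_or_pos a with rfl | ha_pos
  · exact (hstrip 0).1.trans hac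
  · exact Nat.succ_le_succ_iff.mp ((htop 0 ha_pos).symm.trans_le h0)

theorem exists_isVerticalStrip_pred {r k : ℕ} (ν : PartitionOf (r * (k + 1)))
    (hν : ν.parts 0 ≤ k + 1) :
    ∃ ρ : PartitionOf (r * k), ρ.parts 0 ≤ k ∧ ρ.IsVerticalStrip ν := by
  have hlen : r ≤ ν.len := Nat.le_of_mul_le_mul_right
    (ν.le_len_mul_parts_zero.trans (Nat.mul_le_mul_left _ hν)) k.succ_pos
  have hr : ν.parts r ≤ k := by
    have hlt : (r + 1) * ν.parts r < (r + 1) * (k + 1) :=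
      calc (r + 1) * ν.parts r ≤ r * (k + 1) := ν.succ_mul_parts_le_s13 r
        _ < (r + 1) * (k + 1) := Nat.mul_lt_mul_of_pos_right r.lt_succ_self k.succ_pos
    exact Nat.le_of_lt_succ (Nat.lt_of_mul_lt_mul_left hlt)
  exact exists_isVerticalStrip_parts_zero_le (n := r * k) ν hlen hν hr

theorem exists_isVerticalStrip_chain {r k : ℕ} (ν : PartitionOf (r * k)) (hν : ν.parts 0 ≤ k) :
    ∃ lam : (j : ℕ) → PartitionOf (r * j), lam k = ν ∧ (∀ j ≤ k, (lam j).parts 0 ≤ j) ∧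
      ∀ j < k, (lam j).IsVerticalStrip (lam (j + 1)) := by
  induction k with
  | zero =>
    refine ⟨Function.update (fun _ => Classical.arbitrary _) 0 ν, Function.update_self ..,
      fun j hj => ?_, fun j hj => absurd hj j.not_lt_zero⟩
    obtain rfl := Nat.le_zero.mp hj
    rwa [Function.update_self]
  | succ k ih =>
    obtain ⟨ρ, hρ, hstrip⟩ := ν.exists_isVerticalStrip_pred hν
    obtain ⟨lam, rfl, hle, hstep⟩ := ih ρ hρ
    have hupdate : ∀ j ≤ k, Function.update lam (k + 1) ν j = lam j := fun j hj =>
      Function.update_of_ne (by omega) ..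
    refine ⟨Function.update lam (k + 1) ν, Function.update_self .., fun j hj => ?_,
      fun j hj => ?_⟩
    · rcases Nat.le_succ_iff.mp hj with hj | rfl
      · rw [hupdate j hj]
        exact hle j hj
      · rwa [Function.update_self]
    · rw [hupdate j (Nat.le_of_lt_succ hj)]
      rcases Nat.lt_succ_iff_lt_or_eq.mp hj with hj | rfl
      · rw [hupdate (j + 1) hj]
        exact hstep j hj
      · rwa [Function.update_self]

end PartitionOf

theorem exists_vertical_strip_chain_odd_general {r s k : ℕ} (μ : PartitionOf (r * k + s))
    (hlen : s ≤ μ.len) (hμ : μ.parts 0 ≤ k + 1) (hs : μ.parts s ≤ k) :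
    ∃ lam : (j : ℕ) → PartitionOf (r * j),
      (∀ i, (lam 0).parts i = 0) ∧
      (∀ j ≤ k, (lam j).parts 0 ≤ j) ∧
      (∀ j < k, (lam j).IsVerticalStrip (lam (j + 1))) ∧
      (lam k).IsVerticalStrip μ := by
  obtain ⟨ρ, hρ, hlast⟩ := μ.exists_isVerticalStrip_parts_zero_le hlen hμ hs
  obtain ⟨lam, rfl, hle, hstep⟩ := ρ.exists_isVerticalStrip_chain hρ
  have hempty : ∀ i, (lam 0).parts i = 0 := fun i =>
    Nat.le_zero.mp (((lam 0).parts_antitone i.zero_le).trans (hle 0 k.zero_le))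
  exact ⟨lam, hempty, hle, hstep, hlast⟩

/-- For every partition `μ` of `2k + 1` with `μ₁ ≤ k + 1` there is a chain
`∅ = λ⁰, λ¹, …, λ^k, λ^{k+1} = μ` of partitions with `|λ^j| = 2j` and `λ^j₁ ≤ j`
for `j ≤ k`, each `λ^{j+1}` (for `j < k`) obtained from `λ^j` by adding two boxes
no two in the same row, and `μ` obtained from `λ^k` by adding a single box. -/
theorem exists_vertical_strip_chain_odd (k : ℕ) (μ : PartitionOf (2 * k + 1))
    (hμ : μ.parts 0 ≤ k + 1) :
    ∃ lam : (j : ℕ) → PartitionOf (2 * j),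
      (∀ i : ℕ, (lam 0).parts i = 0) ∧
      (∀ j : ℕ, j ≤ k → (lam j).parts 0 ≤ j) ∧
      (∀ j : ℕ, j < k → ∀ i : ℕ,
        (lam j).parts i ≤ (lam (j + 1)).parts i ∧
        (lam (j + 1)).parts i ≤ (lam j).parts i + 1) ∧
      ∃ i₀ : ℕ, μ.parts i₀ = (lam k).parts i₀ + 1 ∧
        ∀ i : ℕ, i ≠ i₀ → μ.parts i = (lam k).parts i := by
  have hlen : 1 ≤ μ.len :=
    Nat.pos_of_mul_pos_right ((2 * k).succ_pos.trans_le μ.le_len_mul_parts_zero)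
  have hsecond : μ.parts 1 ≤ k := by
    have := μ.succ_mul_parts_le_s13 1
    omega
  obtain ⟨lam, hempty, hle, hstep, hlast⟩ :=
    exists_vertical_strip_chain_odd_general μ hlen hμ hsecond
  exact ⟨lam, hempty, hle, hstep, PartitionOf.exists_box_of_parts_le fun i => (hlast i).1⟩
end
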